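/- Let q be a real number with q > 1 and let u be a real number with 0 < u < 1. Then ∑_λ u^{|λ|} · J_λ(q) / ( q^{|λ|²} · ∏_{i=1}^{|λ|} (1 − q^{−i})² ) = ∏_{r=1}^∞ ∏_{s=0}^∞ 1/(1 − u·q^{−(r+s)}), where the sum on the left is over all partitions λ of all nonnegative integers, and both sides converge. -/

import Mathlib

/-- The hook length of the cell `s = (i,j)` of a Young diagram (0-indexed cells). -/
def hookLen (μ : YoungDiagram) (s : ℕ × ℕ) : ℕ :=
  (μ.rowLen s.1 - s.2 - 1) + (μ.colLen s.2 - s.1 - 1) + 1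

/-- `n(λ) = ∑_i (i−1)λ_i`, i.e. the sum over all cells of the (0-indexed) row index. -/
def nstat (μ : YoungDiagram) : ℕ := ∑ s ∈ μ.cells, s.1

/-- `J_λ(q) = q^{|λ|²−|λ|−2n(λ)} (∏_{r=1}^{|λ|}(1−q^{−r}))² / ∏_{s∈λ}(1−q^{−h(s)})²`. -/
noncomputable def Jpoly (q : ℝ) (μ : YoungDiagram) : ℝ :=
  q ^ ((μ.card : ℤ) ^ 2 - (μ.card : ℤ) - 2 * (nstat μ : ℤ)) *
    (∏ r ∈ Finset.range μ.card, (1 - q ^ (-(r + 1 : ℤ)))) ^ 2 /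
    ∏ s ∈ μ.cells, (1 - q ^ (-(hookLen μ s : ℤ))) ^ 2

/-!
Put `t = q⁻¹` and `z = u / q`. The hook formula for the principal specialization of Schur functions
identifies the summand at `λ` with `z ^ |λ| * s_λ(1, t, t², …) ^ 2`, so the theorem is Cauchy's
identity `∑ s_λ(x) s_λ(y) = ∏ (1 - x_i y_j)⁻¹` at `x_i = z t ^ i`, `y_j = t ^ j`.

In `N` variables, Cauchy's identity is the Cauchy–Binet expansion of the determinant of
`(1 - x_i y_j)⁻¹ = ∑ₙ x_i ^ n y_j ^ n` over strictly decreasing exponents `l₁ > ⋯ > l_N ≥ 0`, which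
are the β-numbers of the partitions with at most `N` parts. At powers of `t` the minors are
Vandermonde determinants; the hook lengths in row `i` together with the differences `l_i - l_k`,
`k > i`, fill `{1, …, l_i}`, and this turns them into hook products times the content factors
`∏ (1 - t ^ (N + c(s)))`. These factors lie in `[0, 1]` and tend to `1`, so dominated convergence
lets `N → ∞`.
-/

section CauchyBinet

open Finset Matrix Equiv

theorem inv_one_sub_mul_sub_mul_inv {K : Type*} [Field K] {a b c d : K}
    (hab : a * b ≠ 1) (had : a * d ≠ 1) (hcb : c * b ≠ 1) :
    (1 - a * b)⁻¹ - (1 - c * d) * (1 - a * d)⁻¹ * (1 - c * b)⁻¹ =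
      (a - c) * (1 - a * d)⁻¹ * ((b - d) * (1 - c * b)⁻¹ * (1 - a * b)⁻¹) := by
  have hab' : 1 - a * b ≠ 0 := sub_ne_zero.2 hab.symm
  have had' : 1 - a * d ≠ 0 := sub_ne_zero.2 had.symm
  have hbc' : 1 - b * c ≠ 0 := mul_comm c b ▸ sub_ne_zero.2 hcb.symm
  rw [mul_comm c b]
  field_simp
  ring

-- Subtracting multiples of row `0` clears column `0`, and the remaining minor is a Cauchy matrix
-- up to row and column factors.
theorem det_inv_one_sub_mul {K : Type*} [Field K] {N : ℕ} {x y : Fin N → K}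
    (hxy : ∀ i j, x i * y j ≠ 1) :
    (of fun i j => (1 - x i * y j)⁻¹).det =
      (vandermonde x).det * (vandermonde y).det * ∏ i, ∏ j, (1 - x i * y j)⁻¹ := by
  induction N with
  | zero => simp
  | succ N ih =>
    let c : Fin (N + 1) → K := Fin.cons 0 fun i => (1 - x 0 * y 0) * (1 - x i.succ * y 0)⁻¹
    let B : Matrix (Fin (N + 1)) (Fin (N + 1)) K :=
      of fun i j => (1 - x i * y j)⁻¹ - c i * (1 - x 0 * y j)⁻¹
    have det_eq : (of fun i j => (1 - x i * y j)⁻¹).det = B.det :=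
      det_eq_of_forall_row_eq_smul_add_const c 0 rfl fun i j => by simp [B, c]
    have B_zero (j) : B 0 j = (1 - x 0 * y j)⁻¹ := by simp [B, c]
    have B_succ (i : Fin N) (j) : B i.succ j = (x i.succ - x 0) * (1 - x i.succ * y 0)⁻¹ *
        ((y j - y 0) * (1 - x 0 * y j)⁻¹ * (1 - x i.succ * y j)⁻¹) :=
      inv_one_sub_mul_sub_mul_inv (hxy _ _) (hxy _ _) (hxy _ _)
    have minor_eq : B.submatrix (Fin.succAbove 0) Fin.succ =
        of fun i j => (x i.succ - x 0) * (1 - x i.succ * y 0)⁻¹ *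
          of (fun i j => (y j.succ - y 0) * (1 - x 0 * y j.succ)⁻¹ *
            of (fun i j : Fin N => (1 - x i.succ * y j.succ)⁻¹) i j) i j := by
      ext i j
      exact B_succ i j.succ
    have minor_det := ih (x := x ∘ Fin.succ) (y := y ∘ Fin.succ) fun i j => hxy _ _
    simp only [Function.comp_apply] at minor_det
    rw [det_eq, det_succ_column_zero, Fin.sum_univ_succ, minor_eq, det_mul_column, det_mul_row,
      minor_det]
    simp only [B_zero, B_succ, det_vandermonde, Fin.prod_univ_succ, Fin.prod_Ioi_zero,
      Fin.prod_Ioi_succ, prod_mul_distrib, Function.comp_apply, Fin.val_zero, pow_zero, one_mul,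
      sub_self, zero_mul, mul_zero, sum_const_zero, add_zero]
    ring

theorem det_submatrix_perm_sq {n R : Type*} [Fintype n] [DecidableEq n] [CommRing R]
    (σ : Perm n) (M : Matrix n n R) : (M.submatrix σ id).det ^ 2 = M.det ^ 2 := by
  rw [det_permute, mul_pow]
  rcases Int.units_eq_one_or (Perm.sign σ) with h | h <;> simp [h]

theorem sum_perm_det_mul_prod {ι R : Type*} [CommRing R] {N : ℕ} (a b : Fin N → ι → R)
    (l : Fin N → ι) :
    ∑ σ : Perm (Fin N), (of fun i j => a i (l (σ j))).det * ∏ i, b i (l (σ i)) =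
      (of fun i j => a i (l j)).det * (of fun i j => b i (l j)).det := by
  have det_perm (σ : Perm (Fin N)) : (of fun i j => a i (l (σ j))).det =
      Perm.sign σ * (of fun i j => a i (l j)).det := det_permute' σ (of fun i j => a i (l j))
  rw [← det_transpose (of fun i j => b i (l j)), det_apply' (of fun i j => b i (l j))ᵀ, mul_sum]
  refine sum_congr rfl fun σ _ => ?_
  rw [det_perm]
  simp only [transpose_apply, of_apply]
  ring

theorem bijective_strictAnti_comp_perm {ι : Type*} [LinearOrder ι] (N : ℕ) :
    Function.Bijective fun p : {l : Fin N → ι // StrictAnti l} × Perm (Fin N) =>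
      (⟨p.1.1 ∘ p.2, p.1.2.injective.comp p.2.injective⟩ :
        {k : Fin N → ι // Function.Injective k}) := by
  constructor
  · rintro ⟨⟨l, hl⟩, σ⟩ ⟨⟨m, hm⟩, τ⟩ h
    have comp_eq : l ∘ σ = m ∘ τ := congrArg Subtype.val h
    obtain rfl : l = m := (hl.range_inj hm).1 <| by
      rw [← σ.surjective.range_comp l, comp_eq, τ.surjective.range_comp]
    obtain rfl : σ = τ := Equiv.ext fun i => hl.injective (congrFun comp_eq i)
    rfl
  · rintro ⟨k, hk⟩
    let σ := Tuple.sort (OrderDual.toDual ∘ k)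
    have anti : Antitone (k ∘ σ) := Tuple.monotone_sort (OrderDual.toDual ∘ k)
    refine ⟨⟨⟨k ∘ σ, anti.strictAnti_of_injective (hk.comp σ.injective)⟩, σ⁻¹⟩, ?_⟩
    ext i
    simp

/-- Sorting an injective tuple: it is a strictly decreasing tuple together with a permutation. -/
noncomputable def strictAntiProdPermEquiv (N : ℕ) (ι : Type*) [LinearOrder ι] :
    {l : Fin N → ι // StrictAnti l} × Perm (Fin N) ≃ {k : Fin N → ι // Function.Injective k} :=
  Equiv.ofBijective _ (bijective_strictAnti_comp_perm N)

variable {R : Type*} [NormedCommRing R] {ι : Type*} {N : ℕ}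

theorem summable_norm_prod_pi {f : Fin N → ι → R} (hf : ∀ i, Summable fun n => ‖f i n‖) :
    Summable fun k : Fin N → ι => ‖∏ i, f i (k i)‖ := by
  induction N with
  | zero => exact (hasSum_unique _).summable
  | succ N ih =>
    rw [← (Fin.consEquiv fun _ => ι).summable_iff]
    convert! (hf 0).mul_norm (ih fun i => hf i.succ) using 2
    simp [Fin.prod_univ_succ, Fin.consEquiv]

variable [CompleteSpace R]

theorem hasSum_prod_pi {f : Fin N → ι → R} (hf : ∀ i, Summable fun n => ‖f i n‖) :
    HasSum (fun k : Fin N → ι => ∏ i, f i (k i)) (∏ i, ∑' n, f i n) := by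
  refine (summable_norm_prod_pi hf).of_norm.hasSum_iff.2 ?_
  induction N with
  | zero => simp
  | succ N ih =>
    rw [Fin.prod_univ_succ, ← ih fun i => hf i.succ,
      tsum_mul_tsum_of_summable_norm (hf 0) (summable_norm_prod_pi fun i => hf i.succ),
      ← (Fin.consEquiv fun _ => ι).tsum_eq]
    simp [Fin.prod_univ_succ, Fin.consEquiv]

theorem hasSum_det_mul_prod {a b : Fin N → ι → R}
    (hab : ∀ i j, Summable fun n => ‖a i n * b j n‖) :
    HasSum (fun k : Fin N → ι => (of fun i j => a i (k j)).det * ∏ i, b i (k i))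
      (of fun i j => ∑' n, a i n * b j n).det := by
  simp only [det_apply', of_apply, sum_mul, mul_assoc, ← prod_mul_distrib]
  exact hasSum_sum fun σ _ => (hasSum_prod_pi fun i => hab (σ i) i).mul_left _

theorem hasSum_det_mul_det [LinearOrder ι] {a b : Fin N → ι → R}
    (hab : ∀ i j, Summable fun n => ‖a i n * b j n‖) :
    HasSum (fun l : {l : Fin N → ι // StrictAnti l} =>
        (of fun i j => a i (l.1 j)).det * (of fun i j => b i (l.1 j)).det)
      (of fun i j => ∑' n, a i n * b j n).det := by
  have vanish (k : Fin N → ι) (hk : ¬ Function.Injective k) :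
      (of fun i j => a i (k j)).det * ∏ i, b i (k i) = 0 := by
    obtain ⟨i, j, hij, hne⟩ := Function.not_injective_iff.1 hk
    rw [det_zero_of_column_eq hne fun r => by simp [hij], zero_mul]
  have sum_injective := (hasSum_subtype_iff_of_support_subset
    (s := {k | Function.Injective k}) (Function.support_subset_iff'.2 vanish)).2
      (hasSum_det_mul_prod hab)
  refine HasSum.prod_fiberwise ((strictAntiProdPermEquiv N ι).hasSum_iff.2 sum_injective)
    fun l => ?_
  rw [← sum_perm_det_mul_prod]
  exact hasSum_fintype _

theorem hasSum_det_pow_mul_det_pow {𝕜 : Type*} [NormedField 𝕜] [CompleteSpace 𝕜]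
    {x y : Fin N → 𝕜} (hxy : ∀ i j, ‖x i * y j‖ < 1) :
    HasSum (fun l : {l : Fin N → ℕ // StrictAnti l} =>
        (of fun i j => x i ^ l.1 j).det * (of fun i j => y i ^ l.1 j).det)
      ((vandermonde x).det * (vandermonde y).det * ∏ i, ∏ j, (1 - x i * y j)⁻¹) := by
  have ne_one (i j) : x i * y j ≠ 1 := fun h => by simpa [h] using hxy i j
  have cauchy_binet := hasSum_det_mul_det (a := fun i n => x i ^ n) (b := fun j n => y j ^ n)
    fun i j => by
      simpa only [mul_pow] using summable_norm_geometric_of_norm_lt_one (hxy i j)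
  simpa only [← mul_pow, tsum_geometric_of_norm_lt_one (hxy _ _), det_inv_one_sub_mul ne_one]
    using cauchy_binet

end CauchyBinet

section BetaNumbers

open Finset

variable (μ : YoungDiagram)

theorem lt_rowLen_iff_lt_colLen {i j : ℕ} : j < μ.rowLen i ↔ i < μ.colLen j := by
  rw [← YoungDiagram.mem_iff_lt_rowLen, YoungDiagram.mem_iff_lt_colLen]

theorem rowLen_eq_zero_of_colLen_zero_le {i : ℕ} (hi : μ.colLen 0 ≤ i) : μ.rowLen i = 0 := by
  by_contra h
  exact ((lt_rowLen_iff_lt_colLen μ).1 (Nat.pos_of_ne_zero h)).not_ge hi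

@[simp]
theorem rowLen_bot (i : ℕ) : (⊥ : YoungDiagram).rowLen i = 0 := by
  by_contra h
  exact YoungDiagram.notMem_bot _ (YoungDiagram.mem_iff_lt_rowLen.2 (Nat.pos_of_ne_zero h))

@[simp]
theorem colLen_bot (j : ℕ) : (⊥ : YoungDiagram).colLen j = 0 := by
  by_contra h
  exact YoungDiagram.notMem_bot _ (YoungDiagram.mem_iff_lt_colLen.2 (Nat.pos_of_ne_zero h))

variable {μ} {N : ℕ}

@[to_additive]
theorem prod_cells_eq_prod_rows {M : Type*} [CommMonoid M] (hN : μ.colLen 0 ≤ N)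
    (f : ℕ × ℕ → M) :
    ∏ s ∈ μ.cells, f s = ∏ i : Fin N, ∏ j ∈ range (μ.rowLen i), f (i, j) := by
  rw [Finset.prod_finset_product μ.cells (range N) fun i => range (μ.rowLen i), prod_range]
  rintro ⟨i, j⟩
  have lt_rowLen_imp (h : j < μ.rowLen i) : i < N :=
    ((lt_rowLen_iff_lt_colLen μ).1 h).trans_le ((μ.colLen_anti 0 j j.zero_le).trans hN)
  simp only [YoungDiagram.mem_cells, YoungDiagram.mem_iff_lt_rowLen, mem_range]
  tauto

/-- The `i`-th β-number (first-column hook length) of `μ`, viewed as a partition with `N` parts.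
Only `i < N` is meaningful; beyond that the subtraction is truncated. -/
def betaNumber (N : ℕ) (μ : YoungDiagram) (i : ℕ) : ℕ := μ.rowLen i + (N - 1 - i)

theorem betaNumber_strictAnti (N : ℕ) (μ : YoungDiagram) :
    StrictAnti fun i : Fin N => betaNumber N μ i := by
  intro i j (hij : (i : ℕ) < j)
  have := μ.rowLen_anti i j hij.le
  simp only [betaNumber]
  omega

theorem sum_betaNumber (hN : μ.colLen 0 ≤ N) :
    ∑ i : Fin N, betaNumber N μ i = μ.card + ∑ i : Fin N, betaNumber N ⊥ i := by
  rw [YoungDiagram.card, card_eq_sum_ones, sum_cells_eq_sum_rows hN]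
  simp [betaNumber, sum_add_distrib]

theorem sum_mul_betaNumber (hN : μ.colLen 0 ≤ N) :
    ∑ i : Fin N, i * betaNumber N μ i = nstat μ + ∑ i : Fin N, i * betaNumber N ⊥ i := by
  rw [nstat, sum_cells_eq_sum_rows hN]
  simp [betaNumber, mul_add, sum_add_distrib, mul_comm]

theorem eq_of_betaNumber_eq {ν : YoungDiagram} (hμ : μ.colLen 0 ≤ N) (hν : ν.colLen 0 ≤ N)
    (h : ∀ i : Fin N, betaNumber N μ i = betaNumber N ν i) : μ = ν := by
  have rowLen_eq (i : ℕ) : μ.rowLen i = ν.rowLen i := by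
    rcases lt_or_ge i N with hi | hi
    · exact Nat.add_right_cancel (h ⟨i, hi⟩)
    · rw [rowLen_eq_zero_of_colLen_zero_le μ (hμ.trans hi),
        rowLen_eq_zero_of_colLen_zero_le ν (hν.trans hi)]
  ext ⟨i, j⟩
  simp only [YoungDiagram.mem_cells, YoungDiagram.mem_iff_lt_rowLen, rowLen_eq]

theorem add_sub_le_of_strictAnti {l : Fin N → ℕ} (hl : StrictAnti l) {i j : Fin N} (hij : i ≤ j) :
    l j + (j - i : ℕ) ≤ l i := by
  obtain ⟨j, hj⟩ := j
  induction j, (show (i : ℕ) ≤ j from hij) using Nat.le_induction with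
  | base => simp
  | succ j hij' ih =>
    have step : l ⟨j + 1, hj⟩ < l ⟨j, by omega⟩ := hl (Fin.mk_lt_mk.2 j.lt_succ_self)
    have := ih (by omega) hij'
    simp only at this ⊢
    omega

theorem exists_betaNumber_eq {l : Fin N → ℕ} (hl : StrictAnti l) :
    ∃ μ : YoungDiagram, μ.colLen 0 ≤ N ∧ ∀ i : Fin N, betaNumber N μ i = l i := by
  let row (i : Fin N) : ℕ := l i - (N - 1 - i)
  have row_antitone : Antitone row := by
    intro i j hij
    have := add_sub_le_of_strictAnti hl hij
    simp only [row]
    omega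
  have le_apply (i : Fin N) : N - 1 - i ≤ l i := by
    have := add_sub_le_of_strictAnti hl (i := i) (j := ⟨N - 1, Nat.sub_one_lt_of_lt i.2⟩)
      (Fin.le_def.2 (Nat.le_sub_one_of_lt i.2))
    simp only at this
    omega
  let μ := YoungDiagram.ofRowLens (List.ofFn row) row_antitone.sortedGE_ofFn
  have mem_iff (i j : ℕ) : (i, j) ∈ μ ↔ ∃ h : i < N, j < row ⟨i, h⟩ := by
    simp [μ, YoungDiagram.mem_ofRowLens]
  have rowLen_eq (i : Fin N) : μ.rowLen i = row i := by
    refine eq_of_forall_lt_iff fun j => ?_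
    simp [← YoungDiagram.mem_iff_lt_rowLen, mem_iff]
  refine ⟨μ, ?_, fun i => ?_⟩
  · by_contra! h
    obtain ⟨hlt, -⟩ := (mem_iff N 0).1 (YoungDiagram.mem_iff_lt_colLen.2 h)
    exact hlt.false
  · rw [betaNumber, rowLen_eq, Nat.sub_add_cancel (le_apply i)]

/-- Partitions with at most `N` parts correspond to strictly decreasing `N`-tuples through their
β-numbers. -/
noncomputable def betaNumberEquiv (N : ℕ) :
    {μ : YoungDiagram // μ.colLen 0 ≤ N} ≃ {l : Fin N → ℕ // StrictAnti l} :=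
  Equiv.ofBijective (fun μ => ⟨fun i => betaNumber N μ.1 i, betaNumber_strictAnti N μ.1⟩)
    ⟨fun μ ν h => Subtype.ext <| eq_of_betaNumber_eq μ.2 ν.2 <| congrFun <| congrArg Subtype.val h,
      fun ⟨_, hl⟩ => let ⟨μ, hμ, h⟩ := exists_betaNumber_eq hl
        ⟨⟨μ, hμ⟩, Subtype.ext (funext h)⟩⟩

theorem coe_betaNumberEquiv_apply (μ : {μ : YoungDiagram // μ.colLen 0 ≤ N}) :
    (betaNumberEquiv N μ).1 = fun i : Fin N => betaNumber N μ.1 i :=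
  rfl

section Hooks

variable {i : ℕ}

theorem hookLen_strictAntiOn :
    StrictAntiOn (fun j => hookLen μ (i, j)) (range (μ.rowLen i)) := by
  intro j hj k hk hjk
  simp only [coe_range, Set.mem_Iio, lt_rowLen_iff_lt_colLen] at hj hk
  have := (lt_rowLen_iff_lt_colLen μ).2 hk
  have := μ.colLen_anti j k hjk.le
  simp only [hookLen]
  omega

theorem betaNumber_sub_strictMonoOn :
    StrictMonoOn (fun k => betaNumber N μ i - betaNumber N μ k) (Ioo i N) := by
  intro k hk m hm hkm
  simp only [coe_Ioo, Set.mem_Ioo] at hk hm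
  have := μ.rowLen_anti i k hk.1.le
  have := μ.rowLen_anti k m hkm.le
  simp only [betaNumber]
  omega

-- Whether row `k` reaches column `j` decides on which side of the hook length the difference lies.
theorem disjoint_image_hookLen_image_betaNumber_sub (hN : μ.colLen 0 ≤ N) :
    Disjoint ((range (μ.rowLen i)).image fun j => hookLen μ (i, j))
      ((Ioo i N).image fun k => betaNumber N μ i - betaNumber N μ k) := by
  simp only [disjoint_left, mem_image, mem_range, mem_Ioo, not_exists, not_and]
  rintro _ ⟨j, hj, rfl⟩ k hk
  have := (lt_rowLen_iff_lt_colLen μ).1 hj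
  have := μ.rowLen_anti i k hk.1.le
  have := (μ.colLen_anti 0 j j.zero_le).trans hN
  have := lt_rowLen_iff_lt_colLen μ (i := k) (j := j)
  simp only [hookLen, betaNumber]
  omega

theorem image_hookLen_union_image_betaNumber_sub (hN : μ.colLen 0 ≤ N) (hi : i < N) :
    ((range (μ.rowLen i)).image fun j => hookLen μ (i, j)) ∪
      ((Ioo i N).image fun k => betaNumber N μ i - betaNumber N μ k) =
      Ico 1 (betaNumber N μ i + 1) := by
  apply eq_of_subset_of_card_le
  · simp only [union_subset_iff, image_subset_iff, mem_range, mem_Ioo, mem_Ico]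
    refine ⟨fun j hj => ?_, fun k hk => ?_⟩
    · have := (lt_rowLen_iff_lt_colLen μ).1 hj
      have := (μ.colLen_anti 0 j j.zero_le).trans hN
      simp only [hookLen, betaNumber]
      omega
    · have := μ.rowLen_anti i k hk.1.le
      simp only [betaNumber]
      omega
  · rw [card_union_of_disjoint (disjoint_image_hookLen_image_betaNumber_sub hN),
      card_image_of_injOn hookLen_strictAntiOn.injOn,
      card_image_of_injOn betaNumber_sub_strictMonoOn.injOn, card_range, Nat.card_Ioo,
      Nat.card_Ico, betaNumber]
    omega

theorem prod_hookLen_mul_prod_betaNumber_sub {M : Type*} [CommMonoid M] (hN : μ.colLen 0 ≤ N)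
    (hi : i < N) (f : ℕ → M) :
    (∏ j ∈ range (μ.rowLen i), f (hookLen μ (i, j))) *
      ∏ k ∈ Ioo i N, f (betaNumber N μ i - betaNumber N μ k) =
      ∏ m ∈ range (betaNumber N μ i), f (m + 1) := by
  rw [← prod_image (f := f) hookLen_strictAntiOn.injOn,
    ← prod_image (f := f) betaNumber_sub_strictMonoOn.injOn,
    ← prod_union (disjoint_image_hookLen_image_betaNumber_sub hN),
    image_hookLen_union_image_betaNumber_sub hN hi, prod_Ico_eq_prod_range]
  simp only [Nat.add_sub_cancel, add_comm]

end Hooks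

end BetaNumbers

section PrincipalSpecialization

open Finset Matrix

/-- The product over the cells of `μ` of `1 - t ^ h`, where `h` is the hook length: the denominator
of the hook-content formula. -/
def hookProd {R : Type*} [CommRing R] (t : R) (μ : YoungDiagram) : R :=
  ∏ s ∈ μ.cells, (1 - t ^ hookLen μ s)

/-- The product over the cells of `μ` of `1 - t ^ (N + c)`, where `c` is the content: the numerator
of the hook-content formula. The subtraction is truncated only for cells below row `N`, in which
case the cell `(N, 0)` already makes the product zero. -/
def contentProd {R : Type*} [CommRing R] (N : ℕ) (t : R) (μ : YoungDiagram) : R :=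
  ∏ s ∈ μ.cells, (1 - t ^ (N - s.1 + s.2))

/-- The stable principal specialization `s_μ(1, t, t², …)` of the Schur function, given by the
hook formula. Its product with `contentProd N t μ` is `s_μ(1, t, …, t ^ (N - 1))`. -/
def stableSchur {K : Type*} [Field K] (t : K) (μ : YoungDiagram) : K :=
  t ^ nstat μ / hookProd t μ

section CommRing

variable {R : Type*} [CommRing R] (t : R) {N : ℕ} {μ : YoungDiagram}

theorem contentProd_eq_zero (hN : N < μ.colLen 0) : contentProd N t μ = 0 :=
  prod_eq_zero (i := (N, 0)) (YoungDiagram.mem_iff_lt_colLen.2 hN) (by simp)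

theorem det_vandermonde_pow_of_strictAnti {l : Fin N → ℕ} (hl : StrictAnti l) :
    (vandermonde fun i => t ^ l i).det =
      t ^ (∑ i : Fin N, i * l i) * ∏ i, ∏ j ∈ Ioi i, (1 - t ^ (l i - l j)) := by
  have factor (i j : Fin N) (hij : j ∈ Ioi i) :
      t ^ l j - t ^ l i = t ^ l j * (1 - t ^ (l i - l j)) := by
    rw [mul_sub, mul_one, ← pow_add, Nat.add_sub_cancel' (hl (mem_Ioi.1 hij)).le]
  have prod_pow : ∏ i, ∏ j ∈ Ioi i, t ^ l j = t ^ ∑ i : Fin N, i * l i := by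
    rw [prod_comm' (s' := Iio) (t' := univ) (by simp)]
    simp only [prod_const, Fin.card_Iio, ← pow_mul, prod_pow_eq_pow_sum, mul_comm]
  rw [det_vandermonde, ← prod_pow, ← prod_mul_distrib]
  refine prod_congr rfl fun i _ => ?_
  rw [← prod_mul_distrib]
  exact prod_congr rfl (factor i)

theorem det_vandermonde_pow_betaNumber_mul_hookProd (hN : μ.colLen 0 ≤ N) :
    (vandermonde fun i : Fin N => t ^ betaNumber N μ i).det * hookProd t μ =
      t ^ (∑ i : Fin N, i * betaNumber N μ i) *
        ∏ i : Fin N, ∏ m ∈ range (betaNumber N μ i), (1 - t ^ (m + 1)) := by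
  rw [det_vandermonde_pow_of_strictAnti t (betaNumber_strictAnti N μ), hookProd,
    prod_cells_eq_prod_rows hN, mul_assoc, ← prod_mul_distrib]
  congr 1
  refine prod_congr rfl fun i _ => ?_
  rw [← prod_hookLen_mul_prod_betaNumber_sub hN i.2 fun m => 1 - t ^ m,
    ← Fin.map_valEmbedding_Ioi, prod_map, mul_comm]
  rfl

theorem prod_range_betaNumber {M : Type*} [CommMonoid M] (i : Fin N) (f : ℕ → M) :
    ∏ m ∈ range (betaNumber N μ i), f (m + 1) =
      (∏ m ∈ range (betaNumber N ⊥ i), f (m + 1)) *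
        ∏ j ∈ range (μ.rowLen i), f (N - i + j) := by
  have shift (j : ℕ) : N - 1 - i + j + 1 = N - i + j := by omega
  rw [betaNumber, betaNumber, rowLen_bot, zero_add, add_comm, prod_range_add]
  congr 1
  exact prod_congr rfl fun j _ => by rw [shift]

theorem det_vandermonde_pow_betaNumber_mul_hookProd_eq_bot (hN : μ.colLen 0 ≤ N) :
    (vandermonde fun i : Fin N => t ^ betaNumber N μ i).det * hookProd t μ =
      (vandermonde fun i : Fin N => t ^ betaNumber N ⊥ i).det *
        (t ^ nstat μ * contentProd N t μ) := by
  have hookProd_bot : hookProd t ⊥ = 1 := by simp [hookProd]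
  have bot_eq := det_vandermonde_pow_betaNumber_mul_hookProd t (μ := ⊥)
    ((colLen_bot 0).trans_le N.zero_le)
  rw [hookProd_bot, mul_one] at bot_eq
  rw [det_vandermonde_pow_betaNumber_mul_hookProd t hN, bot_eq, sum_mul_betaNumber hN,
    contentProd, prod_cells_eq_prod_rows hN, pow_add]
  simp only [prod_range_betaNumber (μ := μ) _ fun m => 1 - t ^ m, prod_mul_distrib]
  ring

theorem det_vandermonde_pow_betaNumber_bot_sq :
    (vandermonde fun i : Fin N => t ^ betaNumber N ⊥ i).det ^ 2 =
      (vandermonde fun i : Fin N => t ^ (i : ℕ)).det ^ 2 := by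
  rw [← det_submatrix_perm_sq Fin.revPerm (vandermonde fun i : Fin N => t ^ (i : ℕ))]
  congr 2
  ext i j
  simp [betaNumber, Fin.val_rev, Nat.sub_sub, add_comm]

theorem det_vandermonde_const_mul (z : R) (v : Fin N → R) :
    (vandermonde fun i => z * v i).det =
      z ^ (∑ i : Fin N, betaNumber N ⊥ i) * (vandermonde v).det := by
  simp only [det_vandermonde, ← mul_sub, prod_mul_distrib, prod_const, Fin.card_Ioi,
    prod_pow_eq_pow_sum, betaNumber, rowLen_bot, zero_add]

theorem det_mul_pow (z : R) (v : Fin N → R) (l : Fin N → ℕ) :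
    (of fun i j => (z * v i) ^ l j).det = z ^ (∑ j, l j) * (of fun i j => v i ^ l j).det := by
  simp only [mul_pow, ← prod_pow_eq_pow_sum]
  exact det_mul_row (fun j => z ^ l j) (of fun i j => v i ^ l j)

theorem det_pow_pow_eq_det_vandermonde (l : Fin N → ℕ) :
    (of fun i j : Fin N => (t ^ (i : ℕ)) ^ l j).det = (vandermonde fun i => t ^ l i).det := by
  rw [← det_transpose]
  congr 1
  ext i j
  simp [← pow_mul, mul_comm]

end CommRing

section NormedField

variable {𝕜 : Type*} [NormedField 𝕜] {t z : 𝕜}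

theorem pow_ne_one_of_norm_lt_one (ht : ‖t‖ < 1) {n : ℕ} (hn : n ≠ 0) : t ^ n ≠ 1 := fun h =>
  (pow_lt_one₀ (norm_nonneg t) ht hn).ne (by rw [← norm_pow, h, norm_one])

theorem hookProd_ne_zero (ht : ‖t‖ < 1) (μ : YoungDiagram) : hookProd t μ ≠ 0 :=
  prod_ne_zero_iff.2 fun _ _ =>
    sub_ne_zero.2 (pow_ne_one_of_norm_lt_one ht (Nat.succ_ne_zero _)).symm

theorem pow_right_injective_of_norm_lt_one (ht₀ : t ≠ 0) (ht : ‖t‖ < 1) :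
    Function.Injective fun n : ℕ => t ^ n := by
  refine Function.Injective.of_comp (f := norm) ?_
  simpa [Function.comp_def] using (pow_right_strictAnti₀ (norm_pos_iff.2 ht₀) ht).injective

theorem det_vandermonde_pow_ne_zero (ht₀ : t ≠ 0) (ht : ‖t‖ < 1) (N : ℕ) :
    (vandermonde fun i : Fin N => t ^ (i : ℕ)).det ≠ 0 :=
  det_vandermonde_ne_zero_iff.2 <|
    (pow_right_injective_of_norm_lt_one ht₀ ht).comp Fin.val_injective

-- `s_μ(x) = a_{β(μ)}(x) / a_{β(∅)}(x)` at `x = (1, t, …, t ^ (N - 1))`, squared so that the order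
-- of the variables is irrelevant.
theorem pow_mul_det_vandermonde_pow_betaNumber_sq (ht : ‖t‖ < 1) {N : ℕ} {μ : YoungDiagram}
    (hN : μ.colLen 0 ≤ N) :
    z ^ (∑ i : Fin N, betaNumber N μ i) *
        (vandermonde fun i : Fin N => t ^ betaNumber N μ i).det ^ 2 =
      z ^ (∑ i : Fin N, betaNumber N ⊥ i) * (vandermonde fun i : Fin N => t ^ (i : ℕ)).det ^ 2 *
        (z ^ μ.card * (stableSchur t μ * contentProd N t μ) ^ 2) := by
  rw [eq_div_of_mul_eq (hookProd_ne_zero ht μ)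
      (det_vandermonde_pow_betaNumber_mul_hookProd_eq_bot t hN),
    sum_betaNumber hN, ← det_vandermonde_pow_betaNumber_bot_sq, stableSchur]
  ring

theorem norm_mul_pow_mul_pow_lt_one (ht : ‖t‖ ≤ 1) (hz : ‖z‖ < 1) (i j : ℕ) :
    ‖z * t ^ i * t ^ j‖ < 1 := by
  rw [mul_assoc, ← pow_add, norm_mul, norm_pow]
  exact mul_lt_one_of_nonneg_of_lt_one_left (norm_nonneg z) hz (pow_le_one₀ (norm_nonneg t) ht)

theorem hasSum_zero_pow_card_mul_principalSchur_sq (t : 𝕜) (N : ℕ) :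
    HasSum (fun μ : YoungDiagram => 0 ^ μ.card * (stableSchur t μ * contentProd N t μ) ^ 2) 1 := by
  have value_bot : (0 : 𝕜) ^ (⊥ : YoungDiagram).card *
      (stableSchur t ⊥ * contentProd N t ⊥) ^ 2 = 1 := by
    simp [stableSchur, contentProd, hookProd, nstat, YoungDiagram.card]
  rw [← value_bot]
  refine hasSum_single ⊥ fun μ hμ => ?_
  have card_ne_zero : μ.card ≠ 0 := fun h => hμ (YoungDiagram.ext (card_eq_zero.1 h))
  rw [zero_pow card_ne_zero, zero_mul]

theorem hasSum_pow_card_mul_principalSchur_sq [CompleteSpace 𝕜] (ht₀ : t ≠ 0) (ht : ‖t‖ < 1)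
    (hz : ‖z‖ < 1) (N : ℕ) :
    HasSum (fun μ : YoungDiagram => z ^ μ.card * (stableSchur t μ * contentProd N t μ) ^ 2)
      (∏ p ∈ range N ×ˢ range N, (1 - z * t ^ p.1 * t ^ p.2)⁻¹) := by
  rcases eq_or_ne z 0 with rfl | hz₀
  · simpa using hasSum_zero_pow_card_mul_principalSchur_sq t N
  have support_subset : Function.support (fun μ : YoungDiagram =>
      z ^ μ.card * (stableSchur t μ * contentProd N t μ) ^ 2) ⊆ {μ | μ.colLen 0 ≤ N} :=
    Function.support_subset_iff'.2 fun μ hμ => by simp [contentProd_eq_zero t (not_le.1 hμ)]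
  have factor_ne_zero : z ^ (∑ i : Fin N, betaNumber N ⊥ i) *
      (vandermonde fun i : Fin N => t ^ (i : ℕ)).det ^ 2 ≠ 0 :=
    mul_ne_zero (pow_ne_zero _ hz₀) (pow_ne_zero _ (det_vandermonde_pow_ne_zero ht₀ ht N))
  have cauchy := (betaNumberEquiv N).hasSum_iff.2 <|
    hasSum_det_pow_mul_det_pow (x := fun i : Fin N => z * t ^ (i : ℕ)) (y := fun j => t ^ (j : ℕ))
      fun i j => norm_mul_pow_mul_pow_lt_one ht.le hz i j
  rw [det_vandermonde_const_mul, mul_assoc (z ^ _), ← sq] at cauchy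
  rw [← hasSum_subtype_iff_of_support_subset support_subset, ← hasSum_mul_left_iff factor_ne_zero,
    prod_product]
  simp only [prod_range]
  refine cauchy.congr_fun fun ⟨μ, hμ⟩ => ?_
  simp only [Function.comp_apply, coe_betaNumberEquiv_apply, det_mul_pow,
    det_pow_pow_eq_det_vandermonde]
  rw [← pow_mul_det_vandermonde_pow_betaNumber_sq ht hμ, sq, mul_assoc]

end NormedField

end PrincipalSpecialization

section Limit

open Finset Filter Topology

theorem multipliable_inv_one_sub_of_summable_norm {𝕜 ι : Type*} [NormedField 𝕜] [CompleteSpace 𝕜]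
    {w : ι → 𝕜} (hw : ∀ i, w i ≠ 1) (hsum : Summable fun i => ‖w i‖) :
    Multipliable fun i => (1 - w i)⁻¹ := by
  have hsum' : Summable fun i => ‖-w i‖ := by simpa only [norm_neg] using hsum
  have ne_zero (i : ι) : 1 + -w i ≠ 0 := by
    rw [← sub_eq_add_neg]
    exact sub_ne_zero.2 (hw i).symm
  simpa only [← sub_eq_add_neg] using
    (multipliable_one_add_of_summable hsum').inv₀ (tprod_one_add_ne_zero_of_summable ne_zero hsum')

theorem tendsto_range_product_range_atTop :
    Tendsto (fun N : ℕ => range N ×ˢ range N) atTop atTop := by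
  refine tendsto_atTop_finset_of_monotone
    (fun a b hab => product_subset_product (range_mono hab) (range_mono hab)) fun p => ?_
  exact ⟨p.1 + p.2 + 1, by simp only [mem_product, mem_range]; omega⟩

theorem tendsto_prod_range_product_range {M : Type*} [CommMonoid M] [TopologicalSpace M]
    {f : ℕ × ℕ → M} (hf : Multipliable f) :
    Tendsto (fun N => ∏ p ∈ range N ×ˢ range N, f p) atTop (𝓝 (∏' p, f p)) :=
  hf.hasProd.comp tendsto_range_product_range_atTop

theorem multipliable_inv_one_sub_mul_pow_mul_pow {𝕜 : Type*} [NormedField 𝕜] [CompleteSpace 𝕜]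
    {t z : 𝕜} (ht : ‖t‖ < 1) (hz : ‖z‖ < 1) :
    Multipliable fun p : ℕ × ℕ => (1 - z * t ^ p.1 * t ^ p.2)⁻¹ := by
  have geometric := summable_norm_geometric_of_norm_lt_one ht
  refine multipliable_inv_one_sub_of_summable_norm (fun p h => ?_) ?_
  · simpa [h] using norm_mul_pow_mul_pow_lt_one ht.le hz p.1 p.2
  · simpa only [norm_mul, mul_assoc] using (geometric.mul_norm geometric).mul_left ‖z‖

theorem tendsto_contentProd {𝕜 : Type*} [NormedField 𝕜] {t : 𝕜} (ht : ‖t‖ < 1)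
    (μ : YoungDiagram) :
    Tendsto (fun N => contentProd N t μ) atTop (𝓝 1) := by
  have factor_tendsto (s : ℕ × ℕ) :
      Tendsto (fun N => 1 - t ^ (N - s.1 + s.2)) atTop (𝓝 (1 - 0)) :=
    tendsto_const_nhds.sub <| (tendsto_pow_atTop_nhds_zero_of_norm_lt_one ht).comp <|
      tendsto_atTop_mono (fun N => Nat.le_add_right _ _) (tendsto_sub_atTop_nat s.1)
  simpa [contentProd] using tendsto_finsetProd μ.cells fun s _ => factor_tendsto s

theorem tendsto_pow_card_mul_principalSchur_sq {𝕜 : Type*} [NormedField 𝕜] {t : 𝕜} (ht : ‖t‖ < 1)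
    (z : 𝕜) (μ : YoungDiagram) :
    Tendsto (fun N => z ^ μ.card * (stableSchur t μ * contentProd N t μ) ^ 2) atTop
      (𝓝 (z ^ μ.card * stableSchur t μ ^ 2)) := by
  simpa using (((tendsto_contentProd ht μ).const_mul (stableSchur t μ)).pow 2).const_mul
    (z ^ μ.card)

variable {t z : ℝ}

theorem contentProd_mem_Icc (ht₀ : 0 ≤ t) (ht : t ≤ 1) (N : ℕ) (μ : YoungDiagram) :
    contentProd N t μ ∈ Set.Icc 0 1 := by
  have factor_nonneg (n : ℕ) : 0 ≤ 1 - t ^ n := sub_nonneg.2 (pow_le_one₀ ht₀ ht)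
  have factor_le_one (n : ℕ) : 1 - t ^ n ≤ 1 := sub_le_self 1 (pow_nonneg ht₀ n)
  exact ⟨prod_nonneg fun s _ => factor_nonneg _,
    prod_le_one (fun s _ => factor_nonneg _) fun s _ => factor_le_one _⟩

theorem summable_pow_card_mul_stableSchur_sq (ht₀ : 0 < t) (ht : t < 1) (hz₀ : 0 ≤ z)
    (hz : z < 1) : Summable fun μ : YoungDiagram => z ^ μ.card * stableSchur t μ ^ 2 := by
  have ht' : |t| < 1 := by rwa [abs_of_pos ht₀]
  have hz' : |z| < 1 := by rwa [abs_of_nonneg hz₀]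
  refine summable_of_sum_le (fun μ => by positivity) fun F =>
    le_of_tendsto_of_tendsto'
      (tendsto_finsetSum F fun μ _ => tendsto_pow_card_mul_principalSchur_sq ht' z μ)
      (tendsto_prod_range_product_range (multipliable_inv_one_sub_mul_pow_mul_pow ht' hz'))
      fun N => ?_
  exact sum_le_hasSum F (fun μ _ => by positivity)
    (hasSum_pow_card_mul_principalSchur_sq ht₀.ne' ht' hz' N)

theorem hasSum_pow_card_mul_stableSchur_sq (ht₀ : 0 < t) (ht : t < 1) (hz : |z| < 1) :
    HasSum (fun μ : YoungDiagram => z ^ μ.card * stableSchur t μ ^ 2)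
      (∏' p : ℕ × ℕ, (1 - z * t ^ p.1 * t ^ p.2)⁻¹) := by
  have ht' : |t| < 1 := by rwa [abs_of_pos ht₀]
  have abs_summable := summable_pow_card_mul_stableSchur_sq ht₀ ht (abs_nonneg z) hz
  have norm_eq (μ : YoungDiagram) :
      ‖z ^ μ.card * stableSchur t μ ^ 2‖ = |z| ^ μ.card * stableSchur t μ ^ 2 := by simp
  have dominated (N : ℕ) (μ : YoungDiagram) :
      ‖z ^ μ.card * (stableSchur t μ * contentProd N t μ) ^ 2‖ ≤
        |z| ^ μ.card * stableSchur t μ ^ 2 := by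
    obtain ⟨nonneg, le_one⟩ := contentProd_mem_Icc ht₀.le ht.le N μ
    rw [mul_pow, ← mul_assoc, norm_mul, norm_eq, Real.norm_of_nonneg (sq_nonneg _)]
    exact mul_le_of_le_one_right (by positivity) (pow_le_one₀ nonneg le_one)
  have tsum_tendsto := tendsto_tsum_of_dominated_convergence abs_summable
    (tendsto_pow_card_mul_principalSchur_sq ht' z) (Eventually.of_forall dominated)
  simp only [(hasSum_pow_card_mul_principalSchur_sq ht₀.ne' ht' hz _).tsum_eq] at tsum_tendsto
  have prod_tendsto :=
    tendsto_prod_range_product_range (multipliable_inv_one_sub_mul_pow_mul_pow (z := z) ht' hz)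
  rw [tendsto_nhds_unique prod_tendsto tsum_tendsto]
  exact (Summable.of_norm (by simpa only [norm_eq] using abs_summable)).hasSum

end Limit

theorem pow_card_mul_Jpoly_div {q : ℝ} (hq : 1 < q) (u : ℝ) (μ : YoungDiagram) :
    u ^ μ.card * Jpoly q μ /
        (q ^ (μ.card ^ 2) * ∏ i ∈ Finset.range μ.card, (1 - q ^ (-(i + 1 : ℤ))) ^ 2) =
      (u * q⁻¹) ^ μ.card * stableSchur q⁻¹ μ ^ 2 := by
  have hq₀ : q ≠ 0 := by positivity
  have hook_eq : ∏ s ∈ μ.cells, (1 - q ^ (-(hookLen μ s : ℤ))) ^ 2 = hookProd q⁻¹ μ ^ 2 := by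
    simp only [Finset.prod_pow, hookProd, zpow_neg, zpow_natCast, inv_pow]
  have pochhammer_ne_zero : ∏ i ∈ Finset.range μ.card, (1 - q ^ (-(i + 1 : ℤ))) ≠ 0 :=
    Finset.prod_ne_zero_iff.2 fun i _ =>
      sub_ne_zero.2 (zpow_lt_one_of_neg₀ hq (by omega)).ne'
  have power_eq : q ^ ((μ.card : ℤ) ^ 2 - (μ.card : ℤ) - 2 * (nstat μ : ℤ)) =
      q ^ (μ.card ^ 2) * q⁻¹ ^ μ.card * (q⁻¹ ^ nstat μ) ^ 2 := by
    rw [zpow_sub₀ hq₀, zpow_sub₀ hq₀, mul_comm 2, zpow_mul]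
    simp only [inv_pow, div_eq_mul_inv, ← Nat.cast_pow, zpow_natCast]
    norm_cast
  rw [Jpoly, hook_eq, power_eq, Finset.prod_pow, stableSchur, mul_pow]
  generalize hookProd q⁻¹ μ = H
  field_simp

theorem stmt_7_general (q u : ℝ) (hq : 1 < q) (hu : |u| < q) :
    ∃ S : ℝ,
      HasSum (fun μ : YoungDiagram =>
        u ^ μ.card * Jpoly q μ /
          (q ^ (μ.card ^ 2) *
            ∏ i ∈ Finset.range μ.card, (1 - q ^ (-(i + 1 : ℤ))) ^ 2)) S ∧
      HasProd (fun p : ℕ × ℕ =>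
        (1 - u * q ^ (-((p.1 : ℤ) + 1 + (p.2 : ℤ))))⁻¹) S := by
  have hq₀ : 0 < q := one_pos.trans hq
  have ht₀ : 0 < q⁻¹ := inv_pos.2 hq₀
  have ht : q⁻¹ < 1 := inv_lt_one_of_one_lt₀ hq
  have hz : |u * q⁻¹| < 1 := by
    rwa [abs_mul, abs_of_pos ht₀, ← div_eq_mul_inv, div_lt_one hq₀]
  have factor_eq (p : ℕ × ℕ) :
      u * q ^ (-((p.1 : ℤ) + 1 + (p.2 : ℤ))) = u * q⁻¹ * q⁻¹ ^ p.1 * q⁻¹ ^ p.2 := by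
    rw [← inv_zpow', zpow_add₀ ht₀.ne', zpow_add₀ ht₀.ne', zpow_one, zpow_natCast, zpow_natCast]
    ring
  refine ⟨∏' p : ℕ × ℕ, (1 - u * q⁻¹ * q⁻¹ ^ p.1 * q⁻¹ ^ p.2)⁻¹, ?_, ?_⟩
  · simpa only [pow_card_mul_Jpoly_div hq] using hasSum_pow_card_mul_stableSchur_sq ht₀ ht hz
  · simpa only [factor_eq] using
      (multipliable_inv_one_sub_mul_pow_mul_pow (by rwa [Real.norm_of_nonneg ht₀.le]) hz).hasProd

/-- For real `q > 1`, `0 < u < 1`: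
`∑_λ u^{|λ|} J_λ(q) / (q^{|λ|²} ∏_{i=1}^{|λ|}(1−q^{−i})²)
  = ∏_{r=1}^∞ ∏_{s=0}^∞ 1/(1 − u q^{−(r+s)})`,
the sum being over all partitions of all nonnegative integers, both sides converging. -/
theorem stmt_7 (q u : ℝ) (hq : 1 < q) (hu0 : 0 < u) (hu1 : u < 1) :
    ∃ S : ℝ,
      HasSum (fun μ : YoungDiagram =>
        u ^ μ.card * Jpoly q μ /
          (q ^ (μ.card ^ 2) *
            ∏ i ∈ Finset.range μ.card, (1 - q ^ (-(i + 1 : ℤ))) ^ 2)) S ∧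
      HasProd (fun p : ℕ × ℕ =>
        (1 - u * q ^ (-((p.1 : ℤ) + 1 + (p.2 : ℤ))))⁻¹) S :=
  stmt_7_general q u hq (by rw [abs_of_pos hu0]; exact hu1.trans hq)
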